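/- arXiv:hep-th/9203073 — 3 statements merged into one kernel-verified Lean document; each statement's English description precedes it below -/
import Mathlib

section
/- For all real ν, γ and all θ₁, θ₂, θ₃ ∈ ℂ, the operator family Ŝ(θ) satisfies the Yang–Baxter equation on ℂ²⊗ℂ²⊗ℂ²: Ŝ₁₂(θ₁−θ₂)·Ŝ₁₃(θ₁−θ₃)·Ŝ₂₃(θ₂−θ₃) = Ŝ₂₃(θ₂−θ₃)·Ŝ₁₃(θ₁−θ₃)·Ŝ₁₂(θ₁−θ₂), where the subscripts indicate the pair of tensor factors on which the operator acts (identity on the remaining factor). -/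
/-- The unnormalized modified sine-Gordon S-matrix `Ŝ(θ)` on `ℂ²⊗ℂ²`
(eq. (2.1) of the paper with `Z ≡ 1`); index `0 = e₊`, `1 = e₋`. -/
noncomputable def Shat (ν γ : ℝ) (θ : ℂ) :
    Matrix (Fin 2 × Fin 2) (Fin 2 × Fin 2) ℂ :=
  Matrix.of fun p q =>
    (if p = q then
      (if p.1 = p.2 then Complex.sinh ((ν : ℂ) * θ + Complex.I * (γ : ℂ))
       else Complex.sinh ((ν : ℂ) * θ))
     else 0)
    + (if p = ((1 : Fin 2), (0 : Fin 2)) ∧ q = ((0 : Fin 2), (1 : Fin 2)) then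
        Complex.I * Complex.sin (γ : ℂ) * Complex.exp ((ν : ℂ) * θ) else 0)
    + (if p = ((0 : Fin 2), (1 : Fin 2)) ∧ q = ((1 : Fin 2), (0 : Fin 2)) then
        Complex.I * Complex.sin (γ : ℂ) * Complex.exp (-((ν : ℂ) * θ)) else 0)

/-- Lift of an operator on factors 1,2 to the triple tensor product. -/
noncomputable def on12 {A B C : Type*} [DecidableEq C]
    (S : Matrix (A × B) (A × B) ℂ) : Matrix (A × B × C) (A × B × C) ℂ :=
  Matrix.of fun x y => S (x.1, x.2.1) (y.1, y.2.1) * (if x.2.2 = y.2.2 then 1 else 0)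

/-- Lift of an operator on factors 1,3 to the triple tensor product. -/
noncomputable def on13 {A B C : Type*} [DecidableEq B]
    (S : Matrix (A × C) (A × C) ℂ) : Matrix (A × B × C) (A × B × C) ℂ :=
  Matrix.of fun x y => S (x.1, x.2.2) (y.1, y.2.2) * (if x.2.1 = y.2.1 then 1 else 0)

/-- Lift of an operator on factors 2,3 to the triple tensor product. -/
noncomputable def on23 {A B C : Type*} [DecidableEq A]
    (S : Matrix (B × C) (B × C) ℂ) : Matrix (A × B × C) (A × B × C) ℂ :=
  Matrix.of fun x y => S x.2 y.2 * (if x.1 = y.1 then 1 else 0)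

/-!
Composed with the swap of the two tensor factors, `Ŝ(θ)` becomes
`sinh (νθ + iγ) + sinh (νθ) U`, where `U` is the composite of a cap `ℂ² ⊗ ℂ² → ℂ` and a cup
`ℂ → ℂ² ⊗ ℂ²`. The snake identities make the two copies of `U` in the triple tensor product
generators of a Temperley–Lieb algebra with loop value `-2 cos γ`, and for such generators the
braid form of the Yang–Baxter equation reduces to one scalar identity between hyperbolic sines.
-/

open Matrix Complex

/-- The relations between two adjacent generators of a Temperley–Lieb algebra with loop value
`δ`. -/
structure IsTemperleyLiebPair {R M : Type*} [CommRing R] [Ring M] [Algebra R M]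
    (δ : R) (U V : M) : Prop where
  sq_left : U * U = δ • U
  sq_right : V * V = δ • V
  left_right_left : U * V * U = U
  right_left_right : V * U * V = V

theorem IsTemperleyLiebPair.braid_of_coeff {R M : Type*} [CommRing R] [Ring M] [Algebra R M]
    {δ : R} {U V : M} (h : IsTemperleyLiebPair δ U V) {a₁ b₁ a₂ b₂ a₃ b₃ : R}
    (hcoeff : a₁ * a₂ * b₃ + b₁ * a₂ * a₃ + δ * (b₁ * a₂ * b₃) + b₁ * b₂ * b₃ = a₁ * b₂ * a₃) :
    (a₁ • 1 + b₁ • U) * (a₂ • 1 + b₂ • V) * (a₃ • 1 + b₃ • U) =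
      (a₃ • 1 + b₃ • V) * (a₂ • 1 + b₂ • U) * (a₁ • 1 + b₁ • V) := by
  simp only [add_mul, mul_add, smul_mul_assoc, mul_smul_comm, one_mul, mul_one, h.sq_left,
    h.sq_right, h.left_right_left, h.right_left_right]
  -- Only the terms in `U` and `V` survive, with opposite coefficients.
  linear_combination (norm := module) hcoeff • (U - V)

theorem sinh_add_mul_sinh_add_sinh_mul_sinh_add (x y η : ℂ) :
    sinh (x + η) * sinh y + sinh x * sinh (y + η) =
      2 * cosh η * (sinh x * sinh y) + sinh η * sinh (x + y) := by
  simp only [sinh_add]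
  ring

theorem sinh_add_mul_sinh_add (x y η : ℂ) :
    sinh (x + η) * sinh (y + η) = sinh x * sinh y + sinh η * sinh (x + y + η) := by
  simp only [sinh_add, cosh_add]
  linear_combination sinh x * sinh y * cosh_sq η

/-- The element `sinh (x + η) + sinh x U` with spectral parameter `x` attached to a
Temperley–Lieb generator `U` of loop value `-2 cosh η`. -/
noncomputable def baxterize {M : Type*} [Ring M] [Algebra ℂ M] (η x : ℂ) (U : M) : M :=
  sinh (x + η) • 1 + sinh x • U

theorem map_baxterize {M N : Type*} [Ring M] [Algebra ℂ M] [Ring N] [Algebra ℂ N]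
    (f : M →ₐ[ℂ] N) (η x : ℂ) (U : M) : f (baxterize η x U) = baxterize η x (f U) := by
  simp only [baxterize, map_add, map_smul, map_one]

theorem IsTemperleyLiebPair.baxterize_braid {M : Type*} [Ring M] [Algebra ℂ M] {η : ℂ} {U V : M}
    (h : IsTemperleyLiebPair (-(2 * cosh η)) U V) (x y : ℂ) :
    baxterize η x U * baxterize η (x + y) V * baxterize η y U =
      baxterize η y V * baxterize η (x + y) U * baxterize η x V := by
  refine h.braid_of_coeff ?_
  have hlinear := sinh_add_mul_sinh_add_sinh_mul_sinh_add x y η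
  have hproduct := sinh_add_mul_sinh_add x y η
  linear_combination sinh (x + y + η) * hlinear - sinh (x + y) * hproduct

section TripleTensorProduct

variable {A : Type*}

/-- The matrix of the operator `P S` on `V ⊗ V`, where `P` swaps the two factors. -/
def braidMatrix {R : Type*} (S : Matrix (A × A) (A × A) R) : Matrix (A × A) (A × A) R :=
  S.submatrix Prod.swap id

variable [Fintype A] [DecidableEq A]

theorem on12_mul_on13_mul_on23 (R S T : Matrix (A × A) (A × A) ℂ) :
    on12 (C := A) R * on13 (B := A) S * on23 (A := A) T =
      (on23 (braidMatrix R) * on12 (braidMatrix S) * on23 (braidMatrix T)).submatrix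
        (fun (a, b, c) ↦ (c, b, a)) id := by
  let rotate : A × A × A ≃ A × A × A :=
    (Equiv.prodAssoc A A A).symm.trans (Equiv.prodComm (A × A) A)
  let swap₂₃ : A × A × A ≃ A × A × A := (Equiv.refl A).prodCongr (Equiv.prodComm A A)
  -- After relabelling the summation indices, the three factors agree by definition.
  rw [← submatrix_mul_equiv _ _ _ swap₂₃, ← submatrix_mul_equiv _ _ _ rotate]
  rfl

theorem on23_mul_on13_mul_on12 (R S T : Matrix (A × A) (A × A) ℂ) :
    on23 (A := A) R * on13 (B := A) S * on12 (C := A) T =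
      (on12 (braidMatrix R) * on23 (braidMatrix S) * on12 (braidMatrix T)).submatrix
        (fun (a, b, c) ↦ (c, b, a)) id := by
  let rotate : A × A × A ≃ A × A × A :=
    (Equiv.prodComm A (A × A)).trans (Equiv.prodAssoc A A A)
  let swap₁₂ : A × A × A ≃ A × A × A :=
    ((Equiv.prodAssoc A A A).symm.trans ((Equiv.prodComm A A).prodCongr (Equiv.refl A))).trans
      (Equiv.prodAssoc A A A)
  rw [← submatrix_mul_equiv _ _ _ swap₁₂, ← submatrix_mul_equiv _ _ _ rotate]
  rfl

theorem yangBaxter_of_braid {R S T : Matrix (A × A) (A × A) ℂ}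
    (h : on23 (A := A) (braidMatrix R) * on12 (braidMatrix S) * on23 (braidMatrix T) =
      on12 (braidMatrix T) * on23 (braidMatrix S) * on12 (braidMatrix R)) :
    on12 (C := A) R * on13 (B := A) S * on23 (A := A) T =
      on23 (A := A) T * on13 (B := A) S * on12 (C := A) R := by
  rw [on12_mul_on13_mul_on23, on23_mul_on13_mul_on12, h]

end TripleTensorProduct

section Lifts

variable (A B C : Type*) [Fintype A] [Fintype B] [Fintype C]
  [DecidableEq A] [DecidableEq B] [DecidableEq C]

/-- The lift `on12`, that is `S ↦ S ⊗ 1`, as an algebra homomorphism. -/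
noncomputable def on12AlgHom :
    Matrix (A × B) (A × B) ℂ →ₐ[ℂ] Matrix (A × B × C) (A × B × C) ℂ :=
  ((reindexAlgEquiv ℂ ℂ (Equiv.prodAssoc A B C)).toAlgHom.comp
    (kroneckerAlgEquiv (A × B) C ℂ).toAlgHom).comp Algebra.TensorProduct.includeLeft

/-- The lift `on23`, that is `S ↦ 1 ⊗ S`, as an algebra homomorphism. -/
noncomputable def on23AlgHom :
    Matrix (B × C) (B × C) ℂ →ₐ[ℂ] Matrix (A × B × C) (A × B × C) ℂ :=
  (kroneckerAlgEquiv A (B × C) ℂ).toAlgHom.comp Algebra.TensorProduct.includeRight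

variable {A B C}

theorem on12AlgHom_apply (S : Matrix (A × B) (A × B) ℂ) : on12AlgHom A B C S = on12 S := by
  ext x y
  simp [on12AlgHom, on12, one_apply]

theorem on23AlgHom_apply (S : Matrix (B × C) (B × C) ℂ) : on23AlgHom A B C S = on23 S := by
  ext x y
  simp [on23AlgHom, on23, one_apply]

end Lifts

theorem mul_mul_mul_mul_of_snake {R m n : Type*} [Semiring R] [Fintype m] [Fintype n]
    [DecidableEq n] {C₁ C₂ : Matrix m n R} {D₁ D₂ : Matrix n m R}
    (h₁₂ : D₁ * C₂ = 1) (h₂₁ : D₂ * C₁ = 1) :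
    (C₁ * D₁) * (C₂ * D₂) * (C₁ * D₁) = C₁ * D₁ :=
  calc (C₁ * D₁) * (C₂ * D₂) * (C₁ * D₁)
      = C₁ * (D₁ * C₂) * (D₂ * C₁) * D₁ := by simp only [Matrix.mul_assoc]
    _ = C₁ * D₁ := by rw [h₁₂, h₂₁, Matrix.mul_one, Matrix.mul_one]

section CupCap

variable {A R : Type*} [CommSemiring R]

/-- The rank-one operator on `V ⊗ V` that contracts both factors with the cap of coefficients
`F` and recreates them with the cup of coefficients `E`. -/
def cupCap (E F : Matrix A A R) : Matrix (A × A) (A × A) R :=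
  vecMulVec (vec E) (vec F)

theorem cupCap_apply (E F : Matrix A A R) (p q : A × A) :
    cupCap E F p q = E p.2 p.1 * F q.2 q.1 :=
  rfl

theorem cupCap_mul_self [Fintype A] (E F : Matrix A A R) :
    cupCap E F * cupCap E F = (vec F ⬝ᵥ vec E) • cupCap E F := by
  rw [cupCap, vecMulVec_mul_vecMulVec, vecMulVec_smul]

variable [DecidableEq A]

/-- The map `V → V ⊗ V ⊗ V` that creates the vector `E` of `V ⊗ V` in the first two factors.
Its transpose is the cap contracting these factors with `E`. -/
def cup12 (E : Matrix A A R) : Matrix (A × A × A) A R :=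
  of fun x a ↦ vec E (x.1, x.2.1) * (1 : Matrix A A R) x.2.2 a

/-- The map `V → V ⊗ V ⊗ V` that creates the vector `E` of `V ⊗ V` in the last two factors.
Its transpose is the cap contracting these factors with `E`. -/
def cup23 (E : Matrix A A R) : Matrix (A × A × A) A R :=
  of fun x a ↦ vec E x.2 * (1 : Matrix A A R) x.1 a

variable [Fintype A]

theorem transpose_cup12_mul_cup23 (E F : Matrix A A R) : (cup12 F)ᵀ * cup23 E = E * F := by
  ext a c
  simp [cup12, cup23, mul_apply, Fintype.sum_prod_type, one_apply, vec, mul_comm]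

theorem transpose_cup23_mul_cup12 (E F : Matrix A A R) : (cup23 F)ᵀ * cup12 E = (F * E)ᵀ := by
  ext a c
  simp [cup12, cup23, mul_apply, Fintype.sum_prod_type, one_apply, vec]

theorem on12_cupCap (E F : Matrix A A ℂ) :
    on12 (C := A) (cupCap E F) = cup12 E * (cup12 F)ᵀ := by
  ext x y
  simp [on12, cupCap, cup12, mul_apply, vecMulVec_apply, one_apply, eq_comm]

theorem on23_cupCap (E F : Matrix A A ℂ) :
    on23 (A := A) (cupCap E F) = cup23 E * (cup23 F)ᵀ := by
  ext x y
  simp [on23, cupCap, cup23, mul_apply, vecMulVec_apply, one_apply, eq_comm]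

theorem isTemperleyLiebPair_cupCap {E F : Matrix A A ℂ} (hEF : E * F = 1) :
    IsTemperleyLiebPair (vec F ⬝ᵥ vec E) (on23 (A := A) (cupCap E F))
      (on12 (C := A) (cupCap E F)) := by
  have snake₁₂ : (cup12 F)ᵀ * cup23 E = 1 := by
    rw [transpose_cup12_mul_cup23, hEF]
  have snake₂₁ : (cup23 F)ᵀ * cup12 E = 1 := by
    rw [transpose_cup23_mul_cup12, mul_eq_one_comm.mp hEF, transpose_one]
  constructor
  · rw [← on23AlgHom_apply, ← map_mul, cupCap_mul_self, map_smul]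
  · rw [← on12AlgHom_apply, ← map_mul, cupCap_mul_self, map_smul]
  · simp only [on12_cupCap, on23_cupCap, mul_mul_mul_mul_of_snake snake₂₁ snake₁₂]
  · simp only [on12_cupCap, on23_cupCap, mul_mul_mul_mul_of_snake snake₁₂ snake₂₁]

end CupCap

/-- The coefficients of the `q`-deformed singlet `e₊ ⊗ e₋ - q e₋ ⊗ e₊`, in the index order of
`Matrix.vec`. -/
def qCup {K : Type*} [Ring K] (q : K) : Matrix (Fin 2) (Fin 2) K := !![0, -q; 1, 0]

/-- The coefficients of the cap dual to `qCup q`, for `q ≠ 0`. -/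
def qCap {K : Type*} [DivisionRing K] (q : K) : Matrix (Fin 2) (Fin 2) K := !![0, 1; -q⁻¹, 0]

theorem qCup_mul_qCap {K : Type*} [DivisionRing K] {q : K} (hq : q ≠ 0) :
    qCup q * qCap q = 1 := by
  ext i j
  fin_cases i <;> fin_cases j <;> simp [qCup, qCap, hq]

theorem vec_qCap_dotProduct_vec_qCup {K : Type*} [DivisionRing K] (q : K) :
    vec (qCap q) ⬝ᵥ vec (qCup q) = -(q + q⁻¹) := by
  rw [vec_dotProduct_vec, trace_fin_two]
  simp [qCup, qCap, mul_apply]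

theorem sinh_mul_exp (x η : ℂ) : sinh η * exp x = sinh (x + η) - sinh x * exp (-η) := by
  rw [sinh_add, ← cosh_sub_sinh, ← cosh_add_sinh x]
  ring

theorem sinh_mul_exp_neg (x η : ℂ) : sinh η * exp (-x) = sinh (x + η) - sinh x * exp η := by
  rw [sinh_add, ← cosh_add_sinh η, ← cosh_sub_sinh x]
  ring

theorem braidMatrix_Shat (ν γ : ℝ) (θ : ℂ) :
    braidMatrix (Shat ν γ θ) =
      baxterize (I * γ) (ν * θ) (cupCap (qCup (exp (I * γ))) (qCap (exp (I * γ)))) := by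
  have hsin : I * sin (γ : ℂ) = sinh (I * γ) := by
    rw [mul_comm I (γ : ℂ), sinh_mul_I, mul_comm]
  ext ⟨i, j⟩ ⟨k, l⟩
  simp only [braidMatrix, Shat, hsin]
  rw [sinh_mul_exp_neg, sinh_mul_exp, exp_neg]
  fin_cases i <;> fin_cases j <;> fin_cases k <;> fin_cases l <;>
    simp [baxterize, cupCap_apply, qCup, qCap, one_apply, sub_eq_add_neg]

/-- The modified sine-Gordon S-matrix satisfies the Yang–Baxter equation on `ℂ²⊗ℂ²⊗ℂ²`. -/
theorem Shat_yang_baxter (ν γ : ℝ) (θ₁ θ₂ θ₃ : ℂ) :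
    on12 (C := Fin 2) (Shat ν γ (θ₁ - θ₂)) * on13 (B := Fin 2) (Shat ν γ (θ₁ - θ₃)) *
        on23 (A := Fin 2) (Shat ν γ (θ₂ - θ₃))
      = on23 (A := Fin 2) (Shat ν γ (θ₂ - θ₃)) * on13 (B := Fin 2) (Shat ν γ (θ₁ - θ₃)) *
          on12 (C := Fin 2) (Shat ν γ (θ₁ - θ₂)) := by
  have hloop :
      vec (qCap (exp (I * γ))) ⬝ᵥ vec (qCup (exp (I * γ))) = -(2 * cosh (I * γ)) := by
    rw [vec_qCap_dotProduct_vec_qCup, two_cosh, exp_neg]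
  have hTL := isTemperleyLiebPair_cupCap (qCup_mul_qCap (exp_ne_zero (I * γ)))
  have hsum : ν * (θ₁ - θ₃) = ν * (θ₁ - θ₂) + ν * (θ₂ - θ₃) := by ring
  apply yangBaxter_of_braid
  simp only [braidMatrix_Shat, hsum, ← on12AlgHom_apply, ← on23AlgHom_apply, map_baxterize,
    hloop] at hTL ⊢
  exact hTL.baxterize_braid (ν * (θ₁ - θ₂)) (ν * (θ₂ - θ₃))
end

section
/- For every N ∈ ℕ with J := N/2, and all real ν, γ with sin γ ≠ 0, the Kulish–Reshetikhin S-matrix Ŝ^{(J,½)}(θ) together with the fundamental S-matrix Ŝ(θ) satisfies the mixed Yang–Baxter equation on ℂ^{N+1}⊗ℂ²⊗ℂ²: for all θ₁, θ₂, θ₃ ∈ ℂ, Ŝ^{(J,½)}₁₂(θ₁−θ₂)·Ŝ^{(J,½)}₁₃(θ₁−θ₃)·Ŝ₂₃(θ₂−θ₃) = Ŝ₂₃(θ₂−θ₃)·Ŝ^{(J,½)}₁₃(θ₁−θ₃)·Ŝ^{(J,½)}₁₂(θ₁−θ₂), where the subscripts indicate the pair of tensor factors on which the operator acts (identity on the remaining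 factor). -/
open Kronecker

/-- The q-number `[t]_q = sin(γt)/sin γ`. -/
noncomputable def qnum (γ : ℝ) (t : ℂ) : ℂ := Complex.sin ((γ : ℂ) * t) / Complex.sin (γ : ℂ)

/-- The spin-`J` raising matrix (`J = N/2`, index `k` ↦ weight `M = J − k`):
`E e_M = d_M e_{M+1}`. -/
noncomputable def spinE (N : ℕ) (d : Fin (N + 1) → ℂ) :
    Matrix (Fin (N + 1)) (Fin (N + 1)) ℂ :=
  Matrix.of fun j k => if (j : ℕ) + 1 = (k : ℕ) then d k else 0

/-- The spin-`J` lowering matrix: `F e_M = d_{M−1} e_{M−1}`. -/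
noncomputable def spinF (N : ℕ) (d : Fin (N + 1) → ℂ) :
    Matrix (Fin (N + 1)) (Fin (N + 1)) ℂ :=
  Matrix.of fun j k => if (j : ℕ) = (k : ℕ) + 1 then d j else 0

/-- `d_M² = [J+M+1]_q·[J−M]_q`, i.e. for `M = J − k`, `d_k² = [N+1−k]_q·[k]_q`. -/
def spinCond (N : ℕ) (γ : ℝ) (d : Fin (N + 1) → ℂ) : Prop :=
  ∀ k : Fin (N + 1), d k ^ 2 = qnum γ ((N : ℂ) + 1 - ((k : ℕ) : ℂ)) * qnum γ ((k : ℕ) : ℂ)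

/-- The raising Pauli matrix `σ⁺` (`σ⁺e₋ = e₊`, `σ⁺e₊ = 0`); index `0 = e₊`, `1 = e₋`. -/
noncomputable def σp : Matrix (Fin 2) (Fin 2) ℂ :=
  Matrix.of fun i j => if i = 0 ∧ j = 1 then 1 else 0

/-- The lowering Pauli matrix `σ⁻ = (σ⁺)ᵀ`. -/
noncomputable def σm : Matrix (Fin 2) (Fin 2) ℂ := σp.transpose

/-- The Kulish–Reshetikhin S-matrix `Ŝ^{(J,½)}(θ) = sinh(D(θ)) + i sin γ (e^{νθ}F⊗σ⁺
+ e^{−νθ}E⊗σ⁻)` on `ℂ^{N+1}⊗ℂ²`, where `D(θ) = νθ·I + i(γ/2)(I + H⊗σ³)` is diagonal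
and `sinh` is applied entrywise to its diagonal. -/
noncomputable def SJhat (N : ℕ) (ν γ : ℝ) (d : Fin (N + 1) → ℂ) (θ : ℂ) :
    Matrix (Fin (N + 1) × Fin 2) (Fin (N + 1) × Fin 2) ℂ :=
  (Matrix.of fun p q =>
    if p = q then
      Complex.sinh ((ν : ℂ) * θ + Complex.I * ((γ : ℂ) / 2) *
        (1 + ((N : ℂ) - 2 * ((p.1 : ℕ) : ℂ)) * (if p.2 = 0 then 1 else -1)))
    else (0 : ℂ))
  + (Complex.I * Complex.sin (γ : ℂ) * Complex.exp ((ν : ℂ) * θ)) • (spinF N d ⊗ₖ σp)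
  + (Complex.I * Complex.sin (γ : ℂ) * Complex.exp (-((ν : ℂ) * θ))) • (spinE N d ⊗ₖ σm)

/-! Read in the matrix indices of the two copies of `ℂ²`, the mixed Yang–Baxter equation is the
exchange relation `R L L = L L R` for a `2 × 2` matrix `L` of operators on `ℂ^{N+1}`. Such a
relation holds for the trigonometric `L`-operator over any algebra containing elements
`K₁, K₂, E, F` subject to the relations of `U_q(gl₂)`: since moving `E` or `F` through a diagonal
entry multiplies its spectral parameter by `q^{±1}`, the relations with one off-diagonal entry all
become the addition formula `sinh a sinh (b - c) + sinh c sinh (b + a) = sinh (a + c) sinh b`, and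
those with both `E` and `F` express `[E, F] = (K₁K₂⁻¹ - K₁⁻¹K₂) / (q - q⁻¹)`. The spin-`J` matrices
satisfy the relations of `U_q(gl₂)` with `K₁ = q^{(1+H)/2}`, `K₂ = q^{(1-H)/2}` and `q = e^{iγ}`. -/

section ExchangeRelation

/-- The exchange relation `L₁ M₂ R = R M₂ L₁` between two matrices `L`, `M` with entries in an
algebra and a scalar matrix `R`, written in components. -/
def ExchangeRelation {k A B C : Type*} [CommSemiring k] [Semiring A] [Algebra k A] [Fintype B]
    [Fintype C] (R : Matrix (B × C) (B × C) k) (L : Matrix B B A) (M : Matrix C C A) : Prop :=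
  ∀ b c b' c', ∑ e, ∑ f, R (e, f) (b', c') • (L b e * M c f)
    = ∑ e, ∑ f, R (b, c) (e, f) • (M f c' * L e b')

theorem ExchangeRelation.smul {k A B C : Type*} [CommSemiring k] [Semiring A] [Algebra k A]
    [Fintype B] [Fintype C] {R : Matrix (B × C) (B × C) k} {L : Matrix B B A} {M : Matrix C C A}
    (h : ExchangeRelation R L M) (r s t : k) :
    ExchangeRelation (r • R) (s • L) (t • M) := by
  intro b c b' c'
  have scaled := congrArg ((r * s * t) • ·) (h b c b' c')
  simp only [Finset.smul_sum, smul_smul] at scaled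
  simpa only [Matrix.smul_apply, smul_eq_mul, smul_mul_smul_comm, smul_smul, mul_comm,
    mul_left_comm, mul_assoc] using scaled

/-- An operator on `A ⊗ B` as a matrix, indexed by `B`, of operators on `A`. -/
def opBlocks {α A B : Type*} (S : Matrix (A × B) (A × B) α) : Matrix B B (Matrix A A α) :=
  Matrix.of fun b b' => Matrix.of fun a a' => S (a, b) (a', b')

variable {A B C : Type*} [Fintype A] [Fintype B] [Fintype C]
  [DecidableEq A] [DecidableEq B] [DecidableEq C]

theorem on12_mul_on13_mul_on23_apply (S : Matrix (A × B) (A × B) ℂ)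
    (T : Matrix (A × C) (A × C) ℂ) (R : Matrix (B × C) (B × C) ℂ) (x y : A × B × C) :
    (on12 (C := C) S * on13 (B := B) T * on23 (A := A) R) x y
      = (∑ e, ∑ f, R (e, f) y.2 • (opBlocks S x.2.1 e * opBlocks T x.2.2 f)) x.1 y.1 := by
  simp [Matrix.mul_apply, Matrix.sum_apply, Fintype.sum_prod_type, on12, on13, on23, opBlocks,
    Finset.mul_sum, mul_comm]

theorem on23_mul_on13_mul_on12_apply (S : Matrix (A × B) (A × B) ℂ)
    (T : Matrix (A × C) (A × C) ℂ) (R : Matrix (B × C) (B × C) ℂ) (x y : A × B × C) :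
    (on23 (A := A) R * on13 (B := B) T * on12 (C := C) S) x y
      = (∑ e, ∑ f, R x.2 (e, f) • (opBlocks T f y.2.2 * opBlocks S e y.2.1)) x.1 y.1 := by
  rw [Matrix.mul_assoc]
  simp [Matrix.mul_apply, Matrix.sum_apply, Fintype.sum_prod_type, on12, on13, on23, opBlocks,
    Finset.mul_sum]

theorem ExchangeRelation.yang_baxter {S : Matrix (A × B) (A × B) ℂ}
    {T : Matrix (A × C) (A × C) ℂ} {R : Matrix (B × C) (B × C) ℂ}
    (h : ExchangeRelation R (opBlocks S) (opBlocks T)) :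
    on12 (C := C) S * on13 (B := B) T * on23 (A := A) R
      = on23 (A := A) R * on13 (B := B) T * on12 (C := C) S := by
  ext x y
  rw [on12_mul_on13_mul_on23_apply, on23_mul_on13_mul_on12_apply, h]

end ExchangeRelation

section QSinh

variable {k A : Type*} [Field k] [Ring A] [Algebra k A]

/-- The element `2 sinh (log x + log K)`, which is how the diagonal entries of an `L`-operator with
multiplicative spectral parameter `x` depend on the Cartan generator `K`. -/
def qSinh (x : k) (K : Aˣ) : A := x • (K : A) - x⁻¹ • ((K⁻¹ : Aˣ) : A)

theorem qSinh_commute {K K' : Aˣ} (h : Commute K K') (x y : k) :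
    Commute (qSinh x K) (qSinh y K') := by
  have comm {U V : Aˣ} (hUV : Commute U V) (r s : k) : Commute (r • (U : A)) (s • (V : A)) :=
    (hUV.units_val.smul_left r).smul_right s
  exact ((comm h _ _).sub_right (comm h.inv_right _ _)).sub_left
    ((comm h.inv_left _ _).sub_right (comm h.inv_left.inv_right _ _))

theorem qSinh_mul {r : k} (hr : r ≠ 0) {K : Aˣ} {G : A} (h : K * G = r • (G * K)) (x : k) :
    qSinh x K * G = G * qSinh (x * r) K := by
  have h_inv : ((K⁻¹ : Aˣ) : A) * G = r⁻¹ • (G * ((K⁻¹ : Aˣ) : A)) := by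
    rw [Units.inv_mul_eq_iff_eq_mul, mul_smul_comm, ← mul_assoc, h, smul_mul_assoc,
      Units.mul_inv_cancel_right, inv_smul_smul₀ hr]
  simp only [qSinh, sub_mul, mul_sub, smul_mul_assoc, mul_smul_comm, h, h_inv, smul_smul, mul_inv]

variable {q x y : k}

theorem qSinh_addition (hq : q ≠ 0) (hx : x ≠ 0) (hy : y ≠ 0) (K : Aˣ) :
    (y - y⁻¹) • qSinh (x * q⁻¹) K + (q - q⁻¹) • qSinh (x * y) K
      = (y * q - (y * q)⁻¹) • qSinh x K := by
  simp only [qSinh]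
  match_scalars <;> field_simp <;> ring

variable {K : Aˣ} {G : A}

theorem qSinh_mul_add_mul_qSinh (hq : q ≠ 0) (hx : x ≠ 0) (hy : y ≠ 0)
    (h : K * G = q⁻¹ • (G * K)) :
    (y - y⁻¹) • (qSinh x K * G) + (q - q⁻¹) • (G * qSinh (x * y) K)
      = (y * q - (y * q)⁻¹) • (G * qSinh x K) := by
  simp only [qSinh_mul (inv_ne_zero hq) h, ← mul_smul_comm, ← mul_add, qSinh_addition hq hx hy]

theorem mul_qSinh_add_qSinh_mul (hq : q ≠ 0) (hx : x ≠ 0) (hy : y ≠ 0)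
    (h : K * G = q⁻¹ • (G * K)) :
    (y - y⁻¹) • (G * qSinh (x * y) K) + (q - q⁻¹) • (qSinh x K * G)
      = (y * q - (y * q)⁻¹) • (qSinh (x * y) K * G) := by
  have addition := qSinh_addition hy (mul_ne_zero (mul_ne_zero hx hy) (inv_ne_zero hq)) hq K
  rw [mul_right_comm x y, mul_inv_cancel_right₀ hy, mul_right_comm x, inv_mul_cancel_right₀ hq,
    mul_comm q y, add_comm] at addition
  rw [qSinh_mul (inv_ne_zero hq) h, qSinh_mul (inv_ne_zero hq) h]
  simp only [← mul_smul_comm, ← mul_add, addition]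

theorem mul_qSinh_add_qSinh_mul_of_mul_eq_smul (hq : q ≠ 0) (hx : x ≠ 0) (hy : y ≠ 0)
    (h : K * G = q • (G * K)) :
    (y - y⁻¹) • (G * qSinh x K) + (q - q⁻¹) • (qSinh (x * y) K * G)
      = (y * q - (y * q)⁻¹) • (qSinh x K * G) := by
  have addition := qSinh_addition hq (mul_ne_zero hx hq) hy K
  rw [mul_inv_cancel_right₀ hq, mul_right_comm] at addition
  simp only [qSinh_mul hq h, ← mul_smul_comm, ← mul_add, addition]

theorem qSinh_mul_add_mul_qSinh_of_mul_eq_smul (hq : q ≠ 0) (hx : x ≠ 0) (hy : y ≠ 0)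
    (h : K * G = q • (G * K)) :
    (y - y⁻¹) • (qSinh (x * y) K * G) + (q - q⁻¹) • (G * qSinh x K)
      = (y * q - (y * q)⁻¹) • (G * qSinh (x * y) K) := by
  have addition := qSinh_addition hy (mul_ne_zero hx hy) hq K
  rw [mul_inv_cancel_right₀ hy, mul_comm q y, add_comm] at addition
  simp only [qSinh_mul hq h, ← mul_smul_comm, ← mul_add, addition]

end QSinh

section LOperator

variable {k A : Type*} [Field k] [Ring A] [Algebra k A]

/-- The defining relations of the quantum group `U_q(gl₂)`, with `Kᵢ` standing for `q^{εᵢ}`; the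
last one is `[E, F] = (K₁K₂⁻¹ - K₁⁻¹K₂) / (q - q⁻¹)` with the denominator cleared. -/
structure IsQuantumGl2 (q : k) (K₁ K₂ : Aˣ) (E F : A) : Prop where
  commute : Commute K₁ K₂
  K₁_mul_E : K₁ * E = q • (E * K₁)
  K₁_mul_F : K₁ * F = q⁻¹ • (F * K₁)
  K₂_mul_E : K₂ * E = q⁻¹ • (E * K₂)
  K₂_mul_F : K₂ * F = q • (F * K₂)
  smul_commutator : (q - q⁻¹) • (E * F - F * E)
    = ((K₁ * K₂⁻¹ : Aˣ) : A) - ((K₁⁻¹ * K₂ : Aˣ) : A)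

/-- The trigonometric `L`-operator of `U_q(gl₂)` with multiplicative spectral parameter `x`. -/
def lOperator (q x : k) (K₁ K₂ : Aˣ) (E F : A) : Matrix (Fin 2) (Fin 2) A :=
  !![qSinh x K₁, ((q - q⁻¹) * x) • F; ((q - q⁻¹) * x⁻¹) • E, qSinh x K₂]

/-- The trigonometric six-vertex `R`-matrix with multiplicative spectral parameter `y`. -/
def sixVertexMatrix (q y : k) : Matrix (Fin 2 × Fin 2) (Fin 2 × Fin 2) k :=
  Matrix.of fun p p' =>
    if p = p' then if p.1 = p.2 then y * q - (y * q)⁻¹ else y - y⁻¹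
    else if p = (1, 0) ∧ p' = (0, 1) then (q - q⁻¹) * y
    else if p = (0, 1) ∧ p' = (1, 0) then (q - q⁻¹) * y⁻¹
    else 0

namespace IsQuantumGl2

variable {q x y : k} {K₁ K₂ : Aˣ} {E F : A}

theorem qSinh_mul_qSinh_sub (h : IsQuantumGl2 q K₁ K₂ E F) (hx : x ≠ 0) (hy : y ≠ 0) :
    qSinh x K₁ * qSinh (x * y) K₂ - qSinh (x * y) K₁ * qSinh x K₂
      = ((y - y⁻¹) * (q - q⁻¹)) • (E * F - F * E) := by
  rw [mul_smul, h.smul_commutator]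
  simp only [qSinh, sub_mul, mul_sub, smul_mul_smul_comm, Units.val_mul]
  match_scalars <;> field_simp <;> ring

theorem exchangeRelation (h : IsQuantumGl2 q K₁ K₂ E F) (hq : q ≠ 0) (hx : x ≠ 0) (hy : y ≠ 0) :
    ExchangeRelation (sixVertexMatrix q y) (lOperator q x K₁ K₂ E F)
      (lOperator q (x * y) K₁ K₂ E F) := by
  have comm₁ := (qSinh_commute (Commute.refl K₁) x (x * y)).eq
  have comm₂ := (qSinh_commute (Commute.refl K₂) x (x * y)).eq
  have comm₁₂ := (qSinh_commute h.commute x (x * y)).eq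
  have comm₂₁ := (qSinh_commute h.commute (x * y) x).eq
  have det := h.qSinh_mul_qSinh_sub hx hy
  intro b c b' c'
  fin_cases b <;> fin_cases c <;> fin_cases b' <;> fin_cases c' <;>
    simp only [sixVertexMatrix, lOperator, Matrix.of_apply, Matrix.cons_val', Matrix.cons_val_zero,
      Matrix.cons_val_one, Matrix.cons_val_fin_one, Fin.zero_eta, Fin.mk_one, Fin.isValue,
      Fin.sum_univ_two, Prod.mk.injEq, zero_ne_one, one_ne_zero, and_true, and_false, and_self,
      false_and, ↓reduceIte, zero_smul, zero_add, add_zero, zero_mul, smul_mul_assoc,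
      mul_smul_comm, smul_smul]
  -- In lexicographic order of `(b, c, b', c')`, without `(0, 0, 1, 1)` and `(1, 1, 0, 0)`, where
  -- both sides are the same multiple of `F * F` and of `E * E`.
  · rw [comm₁]
  · linear_combination (norm := (match_scalars <;> field_simp <;> ring))
      ((q - q⁻¹) * (x * y)) • qSinh_mul_add_mul_qSinh hq hx hy h.K₁_mul_F
  · linear_combination (norm := (match_scalars <;> field_simp <;> ring))
      ((q - q⁻¹) * x) • mul_qSinh_add_qSinh_mul hq hx hy h.K₁_mul_F
  · linear_combination (norm := (match_scalars <;> field_simp <;> ring))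
      (-(q - q⁻¹) * (x * y)⁻¹) • mul_qSinh_add_qSinh_mul_of_mul_eq_smul hq hx hy h.K₁_mul_E
  · linear_combination (norm := (match_scalars <;> field_simp <;> ring))
      (y - y⁻¹) • comm₁₂
  · linear_combination (norm := (match_scalars <;> field_simp <;> ring))
      ((q - q⁻¹) * y⁻¹) • det
  · linear_combination (norm := (match_scalars <;> field_simp <;> ring))
      (-(q - q⁻¹) * x) • qSinh_mul_add_mul_qSinh_of_mul_eq_smul hq hx hy h.K₂_mul_F
  · linear_combination (norm := (match_scalars <;> field_simp <;> ring))
      (-(q - q⁻¹) * x⁻¹) • qSinh_mul_add_mul_qSinh_of_mul_eq_smul hq hx hy h.K₁_mul_E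
  · linear_combination (norm := (match_scalars <;> field_simp <;> ring))
      (-(q - q⁻¹) * y) • (det - comm₁₂ + comm₂₁)
  · linear_combination (norm := (match_scalars <;> field_simp <;> ring))
      (-(y - y⁻¹)) • comm₂₁
  · linear_combination (norm := (match_scalars <;> field_simp <;> ring))
      (-(q - q⁻¹) * (x * y)) • mul_qSinh_add_qSinh_mul_of_mul_eq_smul hq hx hy h.K₂_mul_F
  · linear_combination (norm := (match_scalars <;> field_simp <;> ring))
      ((q - q⁻¹) * x⁻¹) • mul_qSinh_add_qSinh_mul hq hx hy h.K₂_mul_E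
  · linear_combination (norm := (match_scalars <;> field_simp <;> ring))
      ((q - q⁻¹) * (x * y)⁻¹) • qSinh_mul_add_mul_qSinh hq hx hy h.K₂_mul_E
  · rw [comm₂]

end IsQuantumGl2

end LOperator

section SpinRepresentation

theorem exp_sub_inv_mul_qnum {γ : ℝ} (hγ : Complex.sin (γ : ℂ) ≠ 0) (t : ℂ) :
    (Complex.exp (Complex.I * γ) - (Complex.exp (Complex.I * γ))⁻¹) * qnum γ t
      = 2 * Complex.sinh (Complex.I * γ * t) := by
  rw [← Complex.exp_neg, ← Complex.two_sinh, mul_assoc Complex.I, mul_comm Complex.I,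
    mul_comm Complex.I, Complex.sinh_mul_I, Complex.sinh_mul_I, qnum]
  field_simp

theorem qnum_mul_qnum_add_one_sub {γ : ℝ} (hγ : Complex.sin (γ : ℂ) ≠ 0) (s t : ℂ) :
    qnum γ s * qnum γ (t + 1) - qnum γ (s + 1) * qnum γ t = qnum γ (s - t) := by
  simp only [qnum, mul_add, mul_sub, mul_one, Complex.sin_add, Complex.sin_sub]
  field_simp
  ring

/-- The eigenvalue of `q^{(1 + εH)/2}`, with `q = e^{iγ}`, on the `k`-th basis vector of the
spin-`N/2` representation, which has `H`-weight `N - 2k`. -/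
noncomputable def spinWeight (N : ℕ) (γ : ℝ) (ε : ℂ) (k : ℕ) : ℂ :=
  Complex.exp (Complex.I * (γ / 2) * (1 + (N - 2 * k) * ε))

theorem spinWeight_ne_zero (N : ℕ) (γ : ℝ) (ε : ℂ) (k : ℕ) : spinWeight N γ ε k ≠ 0 :=
  Complex.exp_ne_zero _

theorem spinWeight_eq_exp_mul_succ (N : ℕ) (γ : ℝ) (ε : ℂ) (k : ℕ) :
    spinWeight N γ ε k = Complex.exp (Complex.I * γ * ε) * spinWeight N γ ε (k + 1) := by
  rw [spinWeight, spinWeight, ← Complex.exp_add]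
  push_cast
  ring_nf

theorem spinWeight_one_mul_inv (N : ℕ) (γ : ℝ) (k : ℕ) :
    spinWeight N γ 1 k * (spinWeight N γ (-1) k)⁻¹ = Complex.exp (Complex.I * γ * (N - 2 * k)) := by
  rw [spinWeight, spinWeight, ← Complex.exp_neg, ← Complex.exp_add]
  ring_nf

/-- The operator `q^{(1 + εH)/2}`, with `q = e^{iγ}`, on the spin-`N/2` representation. -/
noncomputable def spinCartan (N : ℕ) (γ : ℝ) (ε : ℂ) :
    (Matrix (Fin (N + 1)) (Fin (N + 1)) ℂ)ˣ where
  val := Matrix.diagonal fun k => spinWeight N γ ε k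
  inv := Matrix.diagonal fun k => (spinWeight N γ ε k)⁻¹
  val_inv := by simp [spinWeight_ne_zero]
  inv_val := by simp [spinWeight_ne_zero]

theorem qSinh_exp_spinCartan (N : ℕ) (γ : ℝ) (ε z : ℂ) :
    qSinh (Complex.exp z) (spinCartan N γ ε) = Matrix.diagonal fun k : Fin (N + 1) =>
      2 * Complex.sinh (z + Complex.I * (γ / 2) * (1 + (N - 2 * (k : ℕ)) * ε)) := by
  ext j k
  by_cases h : j = k <;>
    simp [h, qSinh, spinCartan, spinWeight, Complex.two_sinh, Complex.exp_add, Complex.exp_neg,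
      mul_comm]

theorem spinCartan_commute (N : ℕ) (γ : ℝ) (ε ε' : ℂ) :
    Commute (spinCartan N γ ε) (spinCartan N γ ε') :=
  Units.ext (Matrix.commute_diagonal _ _)

theorem spinCartan_mul_spinE (N : ℕ) (γ : ℝ) (ε : ℂ) (d : Fin (N + 1) → ℂ) :
    spinCartan N γ ε * spinE N d
      = Complex.exp (Complex.I * γ * ε) • (spinE N d * spinCartan N γ ε) := by
  ext j k
  by_cases h : (j : ℕ) + 1 = k
  · simp [spinCartan, spinE, ← h, spinWeight_eq_exp_mul_succ N γ ε j, mul_comm, mul_left_comm]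
  · simp [spinCartan, spinE, h]

theorem spinCartan_mul_spinF (N : ℕ) (γ : ℝ) (ε : ℂ) (d : Fin (N + 1) → ℂ) :
    spinCartan N γ ε * spinF N d
      = (Complex.exp (Complex.I * γ * ε))⁻¹ • (spinF N d * spinCartan N γ ε) := by
  ext j k
  by_cases h : (j : ℕ) = k + 1
  · simp [spinCartan, spinF, h, spinWeight_eq_exp_mul_succ N γ ε k, mul_comm, mul_left_comm]
  · simp [spinCartan, spinF, h]

variable {N : ℕ} {γ : ℝ} {d : Fin (N + 1) → ℂ}

theorem spinF_mul_spinE (hd : spinCond N γ d) :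
    spinF N d * spinE N d = Matrix.diagonal fun j : Fin (N + 1) =>
      qnum γ (N - (j : ℕ) + 1) * qnum γ (j : ℕ) := by
  ext j k
  rw [Matrix.mul_apply, Matrix.diagonal_apply]
  induction j using Fin.cases with
  | zero => simp [spinF, qnum]
  | succ i =>
    rw [Finset.sum_eq_single i.castSucc]
    · rw [← add_sub_right_comm, ← hd]
      by_cases h : i.succ = k
      · subst h
        simp [spinF, spinE, sq]
      · have : ¬ (i : ℕ) + 1 = k := by simpa [Fin.ext_iff] using h
        simp [spinE, h, this]
    · intro b _ hb
      have : ¬ (i : ℕ) = b := by simpa [Fin.ext_iff, eq_comm] using hb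
      simp [spinF, this]
    · simp

theorem spinE_mul_spinF (hd : spinCond N γ d) :
    spinE N d * spinF N d = Matrix.diagonal fun j : Fin (N + 1) =>
      qnum γ (N - (j : ℕ)) * qnum γ ((j : ℕ) + 1) := by
  ext j k
  rw [Matrix.mul_apply, Matrix.diagonal_apply]
  induction j using Fin.lastCases with
  | last =>
    have spinE_last (b : Fin (N + 1)) : spinE N d (Fin.last N) b = 0 := by
      simp [spinE, b.isLt.ne']
    simp [spinE_last, qnum]
  | cast i =>
    rw [Finset.sum_eq_single i.succ]
    · have hd_succ := hd i.succ
      simp only [Fin.val_succ, Nat.cast_add, Nat.cast_one, add_sub_add_right_eq_sub] at hd_succ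
      rw [Fin.val_castSucc, ← hd_succ]
      by_cases h : i.castSucc = k
      · subst h
        simp [spinF, spinE, sq]
      · have : ¬ (i : ℕ) = k := by simpa [Fin.ext_iff] using h
        simp [spinF, h, this]
    · intro b _ hb
      have : ¬ (i : ℕ) + 1 = b := by simpa [Fin.ext_iff, eq_comm] using hb
      simp [spinE, this]
    · simp

theorem spinE_mul_spinF_sub (hγ : Complex.sin (γ : ℂ) ≠ 0) (hd : spinCond N γ d) :
    spinE N d * spinF N d - spinF N d * spinE N d
      = Matrix.diagonal fun j : Fin (N + 1) => qnum γ (N - 2 * (j : ℕ)) := by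
  rw [spinE_mul_spinF hd, spinF_mul_spinE hd, Matrix.diagonal_sub]
  congr! 2 with j
  rw [qnum_mul_qnum_add_one_sub hγ]
  congr 1
  ring

theorem isQuantumGl2_spin (hγ : Complex.sin (γ : ℂ) ≠ 0) (hd : spinCond N γ d) :
    IsQuantumGl2 (Complex.exp (Complex.I * γ)) (spinCartan N γ 1) (spinCartan N γ (-1))
      (spinE N d) (spinF N d) where
  commute := spinCartan_commute N γ 1 (-1)
  K₁_mul_E := by simpa using spinCartan_mul_spinE N γ 1 d
  K₁_mul_F := by simpa using spinCartan_mul_spinF N γ 1 d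
  K₂_mul_E := by simpa [Complex.exp_neg] using spinCartan_mul_spinE N γ (-1) d
  K₂_mul_F := by simpa [Complex.exp_neg] using spinCartan_mul_spinF N γ (-1) d
  smul_commutator := by
    rw [spinE_mul_spinF_sub hγ hd, ← Matrix.diagonal_smul]
    simp only [spinCartan, Units.val_mul, Units.inv_mk, Matrix.diagonal_mul_diagonal,
      Matrix.diagonal_sub]
    congr! 2 with j
    rw [Pi.smul_apply, smul_eq_mul, exp_sub_inv_mul_qnum hγ, Complex.two_sinh, Complex.exp_neg,
      ← spinWeight_one_mul_inv, mul_inv, inv_inv]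

end SpinRepresentation

section SMatrices

theorem I_mul_sin_eq (γ : ℂ) : Complex.I * Complex.sin γ
    = 1 / 2 * (Complex.exp (Complex.I * γ) - (Complex.exp (Complex.I * γ))⁻¹) := by
  rw [← Complex.exp_neg, ← Complex.two_sinh, mul_comm Complex.I γ, Complex.sinh_mul_I]
  ring

theorem opBlocks_SJhat (N : ℕ) (ν γ : ℝ) (d : Fin (N + 1) → ℂ) (θ : ℂ) :
    opBlocks (SJhat N ν γ d θ) = (1 / 2 : ℂ) • lOperator (Complex.exp (Complex.I * γ))
      (Complex.exp (ν * θ)) (spinCartan N γ 1) (spinCartan N γ (-1)) (spinE N d) (spinF N d) := by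
  ext b b' j k
  fin_cases b <;> fin_cases b' <;>
    simp [opBlocks, SJhat, lOperator, σp, σm, qSinh_exp_spinCartan, Matrix.diagonal_apply,
      I_mul_sin_eq, Complex.exp_neg, mul_assoc]

theorem Shat_eq_smul_sixVertexMatrix (ν γ : ℝ) (θ : ℂ) :
    Shat ν γ θ = (1 / 2 : ℂ) • sixVertexMatrix (Complex.exp (Complex.I * γ))
      (Complex.exp (ν * θ)) := by
  ext p p'
  fin_cases p <;> fin_cases p' <;>
    simp [Shat, sixVertexMatrix, I_mul_sin_eq, Complex.sinh, Complex.exp_add, Complex.exp_neg]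
  all_goals ring

end SMatrices

/-- The mixed Yang–Baxter equation on `ℂ^{N+1}⊗ℂ²⊗ℂ²` for the Kulish–Reshetikhin
S-matrix `Ŝ^{(J,½)}` and the fundamental S-matrix `Ŝ`. -/
theorem SJhat_mixed_yang_baxter (N : ℕ) (ν γ : ℝ) (hγ : Complex.sin (γ : ℂ) ≠ 0)
    (d : Fin (N + 1) → ℂ) (hd : spinCond N γ d) (θ₁ θ₂ θ₃ : ℂ) :
    on12 (C := Fin 2) (SJhat N ν γ d (θ₁ - θ₂)) *
        on13 (B := Fin 2) (SJhat N ν γ d (θ₁ - θ₃)) *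
        on23 (A := Fin (N + 1)) (Shat ν γ (θ₂ - θ₃))
      = on23 (A := Fin (N + 1)) (Shat ν γ (θ₂ - θ₃)) *
          on13 (B := Fin 2) (SJhat N ν γ d (θ₁ - θ₃)) *
          on12 (C := Fin 2) (SJhat N ν γ d (θ₁ - θ₂)) := by
  have exp_mul_exp : Complex.exp (ν * (θ₁ - θ₂)) * Complex.exp (ν * (θ₂ - θ₃))
      = Complex.exp (ν * (θ₁ - θ₃)) := by
    rw [← Complex.exp_add]
    ring_nf
  apply ExchangeRelation.yang_baxter
  rw [opBlocks_SJhat, opBlocks_SJhat, Shat_eq_smul_sixVertexMatrix, ← exp_mul_exp]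
  exact ((isQuantumGl2_spin hγ hd).exchangeRelation (Complex.exp_ne_zero _)
    (Complex.exp_ne_zero _) (Complex.exp_ne_zero _)).smul _ _ _
end

section
/- Let ν, γ ∈ ℝ with ν ≠ 0, sin γ ≠ 0 and sin 2γ ≠ 0, and let θ₀ := iγ/ν be the fusion point. Then the operator Ŝ(θ₀) on ℂ²⊗ℂ² is degenerate: its kernel is exactly the line spanned by the q-singlet s := e^{−iγ/2}·e₊⊗e₋ − e^{iγ/2}·e₋⊗e₊, and its image is exactly the 3-dimensional q-triplet subspace spanned by e₊⊗e₊, e₋⊗e₋ and e^{−iγ/2}·e₊⊗e₋ + e^{iγ/2}·e₋⊗e₊. (At the bound-state pole θ = iγ/ν the tensor product of two doublets degenerates onto the isospin-1 component, the mechanism behind the fusion procedure of Section 4.) -/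
/-- The basis vector `e_i ⊗ e_j` of `ℂ²⊗ℂ²`. -/
noncomputable def bvec (i j : Fin 2) : Fin 2 × Fin 2 → ℂ :=
  fun p => if p = (i, j) then 1 else 0

/-!
For every `θ`, with `q = e^{νθ}`, the q-singlet and the q-triplet vectors diagonalize `Ŝ(θ)`: the
eigenvalue is `sinh(νθ) - i sin γ` on the singlet, `sinh(νθ) + i sin γ` on the weight-zero triplet
vector and `sinh(νθ + iγ)` on the other two. Since `sinh(iγ) = i sin γ`, at `νθ = iγ` the singlet
eigenvalue vanishes, while the others become `2i sin γ` and `i sin 2γ`. Eigenspaces for distinct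
eigenvalues are independent, so the kernel is exactly the singlet line, and the image is the span of
the eigenvectors with nonzero eigenvalue.
-/

section Diagonalizable

open Submodule

section Kernel

variable {R V : Type*} [CommRing R] [IsDomain R] [AddCommGroup V] [Module R V]
  [Module.IsTorsionFree R V] {f : Module.End R V} {S T : Set V}

theorem disjoint_ker_span_of_eigenvectors (hT : ∀ v ∈ T, ∃ μ ≠ (0 : R), f v = μ • v) :
    Disjoint (LinearMap.ker f) (span R T) := by
  have hspan : span R T ≤ ⨆ μ ≠ 0, f.eigenspace μ := by
    refine span_le.mpr fun v hv ↦ ?_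
    obtain ⟨μ, hμ, hfv⟩ := hT v hv
    exact le_iSup₂ (f := fun μ (_ : μ ≠ 0) ↦ f.eigenspace μ) μ hμ
      (Module.End.mem_eigenspace_iff.mpr hfv)
  rw [← Module.End.eigenspace_zero]
  exact (f.eigenspaces_iSupIndep 0).mono_right hspan

theorem ker_eq_span_of_eigenvectors (hS : ∀ v ∈ S, f v = 0)
    (hT : ∀ v ∈ T, ∃ μ ≠ (0 : R), f v = μ • v) (hST : span R (S ∪ T) = ⊤) :
    LinearMap.ker f = span R S := by
  have hle : span R S ≤ LinearMap.ker f := span_le.mpr hS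
  refine (eq_of_le_of_inf_le_of_sup_le (z := span R T) hle ?_ ?_).symm
  · exact (disjoint_ker_span_of_eigenvectors hT).eq_bot.le.trans bot_le
  · exact le_top.trans_eq (hST.symm.trans (span_union S T))

end Kernel

theorem range_eq_span_of_eigenvectors {K V : Type*} [DivisionRing K] [AddCommGroup V] [Module K V]
    {f : Module.End K V} {S T : Set V} (hS : ∀ v ∈ S, f v = 0)
    (hT : ∀ v ∈ T, ∃ μ ≠ (0 : K), f v = μ • v) (hST : span K (S ∪ T) = ⊤) :
    LinearMap.range f = span K T := by
  apply le_antisymm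
  · rw [LinearMap.range_eq_map, ← hST, map_span_le]
    rintro v (hv | hv)
    · exact hS v hv ▸ zero_mem _
    · obtain ⟨μ, -, hfv⟩ := hT v hv
      exact hfv ▸ smul_mem _ μ (subset_span hv)
  · refine span_le.mpr fun v hv ↦ ?_
    obtain ⟨μ, hμ, hfv⟩ := hT v hv
    exact ⟨μ⁻¹ • v, by rw [map_smul, hfv, inv_smul_smul₀ hμ]⟩

end Diagonalizable

theorem exp_div_two_mul_exp_neg_div_two (z : ℂ) :
    Complex.exp (z / 2) * Complex.exp (-z / 2) = 1 := by
  rw [neg_div, ← Complex.exp_add, add_neg_cancel, Complex.exp_zero]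

theorem exp_mul_exp_neg_div_two (z : ℂ) :
    Complex.exp z * Complex.exp (-z / 2) = Complex.exp (z / 2) := by
  rw [← Complex.exp_add]
  ring_nf

theorem exp_neg_mul_exp_div_two (z : ℂ) :
    Complex.exp (-z) * Complex.exp (z / 2) = Complex.exp (-z / 2) := by
  simpa only [neg_neg] using exp_mul_exp_neg_div_two (-z)

/-- The singlet vector of `ℂ²⊗ℂ²` for the deformation parameter `q = e^z`. The argument is `z`
rather than `q` so that the half powers `q^{±1/2} = e^{±z/2}` need no choice of branch. -/
noncomputable def qSinglet (z : ℂ) : Fin 2 × Fin 2 → ℂ :=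
  Complex.exp (-z / 2) • bvec 0 1 - Complex.exp (z / 2) • bvec 1 0

/-- The weight-zero vector of the triplet of `ℂ²⊗ℂ²` for the deformation parameter `q = e^z`; the
other two vectors of the triplet are `bvec 0 0` and `bvec 1 1`. -/
noncomputable def qTripletZero (z : ℂ) : Fin 2 × Fin 2 → ℂ :=
  Complex.exp (-z / 2) • bvec 0 1 + Complex.exp (z / 2) • bvec 1 0

theorem bvec_eq_single (i j : Fin 2) : bvec i j = Pi.single (i, j) 1 := by
  ext p
  simp only [bvec, Pi.single_apply]

theorem span_range_bvec :
    Submodule.span ℂ (Set.range fun p : Fin 2 × Fin 2 ↦ bvec p.1 p.2) = ⊤ := by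
  rw [← (Pi.basisFun ℂ (Fin 2 × Fin 2)).span_eq]
  congr! with p
  rw [bvec_eq_single, Pi.basisFun_apply]

theorem bvec_zero_one_eq (z : ℂ) :
    bvec 0 1 = (Complex.exp (z / 2) / 2) • (qTripletZero z + qSinglet z) := by
  rw [qTripletZero, qSinglet]
  match_scalars
  · linear_combination -exp_div_two_mul_exp_neg_div_two z
  · ring

theorem bvec_one_zero_eq (z : ℂ) :
    bvec 1 0 = (Complex.exp (-z / 2) / 2) • (qTripletZero z - qSinglet z) := by
  rw [qTripletZero, qSinglet]
  match_scalars
  · linear_combination -exp_div_two_mul_exp_neg_div_two z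
  · ring

theorem span_qSinglet_union_qTriplet (z : ℂ) :
    Submodule.span ℂ ({qSinglet z} ∪ {bvec 0 0, bvec 1 1, qTripletZero z}) = ⊤ := by
  set W := Submodule.span ℂ ({qSinglet z} ∪ {bvec 0 0, bvec 1 1, qTripletZero z})
  have hs : qSinglet z ∈ W := Submodule.subset_span (by simp)
  have ht : qTripletZero z ∈ W := Submodule.subset_span (by simp)
  rw [eq_top_iff, ← span_range_bvec, Submodule.span_le]
  rintro _ ⟨⟨i, j⟩, rfl⟩
  fin_cases i <;> fin_cases j
  · exact Submodule.subset_span (by simp)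
  · change bvec 0 1 ∈ W
    rw [bvec_zero_one_eq z]
    exact W.smul_mem _ (W.add_mem ht hs)
  · change bvec 1 0 ∈ W
    rw [bvec_one_zero_eq z]
    exact W.smul_mem _ (W.sub_mem ht hs)
  · exact Submodule.subset_span (by simp)

section Action

variable (ν γ : ℝ) (θ : ℂ)

theorem Shat_mulVec_bvec_self (i : Fin 2) :
    (Shat ν γ θ).mulVec (bvec i i) = Complex.sinh (ν * θ + Complex.I * γ) • bvec i i := by
  rw [bvec_eq_single, Matrix.mulVec_single_one]
  ext ⟨k, l⟩
  fin_cases i <;> fin_cases k <;> fin_cases l <;> simp [Shat]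

theorem Shat_mulVec_bvec_zero_one :
    (Shat ν γ θ).mulVec (bvec 0 1) = Complex.sinh (ν * θ) • bvec 0 1
      + (Complex.I * Complex.sin γ * Complex.exp (ν * θ)) • bvec 1 0 := by
  simp only [bvec_eq_single, Matrix.mulVec_single_one]
  ext ⟨k, l⟩
  fin_cases k <;> fin_cases l <;> simp [Shat]

theorem Shat_mulVec_bvec_one_zero :
    (Shat ν γ θ).mulVec (bvec 1 0) = Complex.sinh (ν * θ) • bvec 1 0
      + (Complex.I * Complex.sin γ * Complex.exp (-(ν * θ))) • bvec 0 1 := by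
  simp only [bvec_eq_single, Matrix.mulVec_single_one]
  ext ⟨k, l⟩
  fin_cases k <;> fin_cases l <;> simp [Shat]

theorem Shat_mulVec_qSinglet :
    (Shat ν γ θ).mulVec (qSinglet (ν * θ)) =
      (Complex.sinh (ν * θ) - Complex.I * Complex.sin γ) • qSinglet (ν * θ) := by
  rw [qSinglet, Matrix.mulVec_sub, Matrix.mulVec_smul, Matrix.mulVec_smul,
    Shat_mulVec_bvec_zero_one, Shat_mulVec_bvec_one_zero]
  match_scalars
  · linear_combination -(Complex.I * Complex.sin γ) * exp_neg_mul_exp_div_two (ν * θ)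
  · linear_combination (Complex.I * Complex.sin γ) * exp_mul_exp_neg_div_two (ν * θ)

theorem Shat_mulVec_qTripletZero :
    (Shat ν γ θ).mulVec (qTripletZero (ν * θ)) =
      (Complex.sinh (ν * θ) + Complex.I * Complex.sin γ) • qTripletZero (ν * θ) := by
  rw [qTripletZero, Matrix.mulVec_add, Matrix.mulVec_smul, Matrix.mulVec_smul,
    Shat_mulVec_bvec_zero_one, Shat_mulVec_bvec_one_zero]
  match_scalars
  · linear_combination (Complex.I * Complex.sin γ) * exp_neg_mul_exp_div_two (ν * θ)
  · linear_combination (Complex.I * Complex.sin γ) * exp_mul_exp_neg_div_two (ν * θ)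

end Action

theorem sinh_I_mul (z : ℂ) : Complex.sinh (Complex.I * z) = Complex.I * Complex.sin z := by
  rw [mul_comm, Complex.sinh_mul_I, mul_comm]

theorem sin_ne_zero_of_sinh_add_I_mul_ne_zero {z w : ℂ}
    (hz : Complex.sinh z = Complex.I * Complex.sin w)
    (hzw : Complex.sinh (z + Complex.I * w) ≠ 0) : Complex.sin w ≠ 0 := by
  contrapose! hzw
  rw [Complex.sinh_add, sinh_I_mul, hz, hzw]
  ring

theorem Shat_degenerates_at_fusion_point_general (ν γ : ℝ) (θ : ℂ)
    (hsinglet : Complex.sinh (ν * θ) = Complex.I * Complex.sin γ)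
    (htriplet : Complex.sinh (ν * θ + Complex.I * γ) ≠ 0) :
    LinearMap.ker (Shat ν γ θ).mulVecLin = Submodule.span ℂ {qSinglet (ν * θ)} ∧
    LinearMap.range (Shat ν γ θ).mulVecLin =
      Submodule.span ℂ {bvec 0 0, bvec 1 1, qTripletZero (ν * θ)} := by
  have hsin : Complex.sin γ ≠ 0 := sin_ne_zero_of_sinh_add_I_mul_ne_zero hsinglet htriplet
  have hsum : Complex.sinh (ν * θ) + Complex.I * Complex.sin γ ≠ 0 := by
    rw [hsinglet, ← two_mul]
    exact mul_ne_zero two_ne_zero (mul_ne_zero Complex.I_ne_zero hsin)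
  have hS : ∀ v ∈ ({qSinglet (ν * θ)} : Set _), (Shat ν γ θ).mulVecLin v = 0 := by
    rintro _ rfl
    rw [Matrix.mulVecLin_apply, Shat_mulVec_qSinglet, hsinglet, sub_self, zero_smul]
  have hT : ∀ v ∈ ({bvec 0 0, bvec 1 1, qTripletZero (ν * θ)} : Set _),
      ∃ μ ≠ (0 : ℂ), (Shat ν γ θ).mulVecLin v = μ • v := by
    rintro _ (rfl | rfl | rfl)
    · exact ⟨_, htriplet, Shat_mulVec_bvec_self ν γ θ 0⟩
    · exact ⟨_, htriplet, Shat_mulVec_bvec_self ν γ θ 1⟩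
    · exact ⟨_, hsum, Shat_mulVec_qTripletZero ν γ θ⟩
  have hST := span_qSinglet_union_qTriplet (ν * θ)
  exact ⟨ker_eq_span_of_eigenvectors hS hT hST, range_eq_span_of_eigenvectors hS hT hST⟩

/-- At the fusion point `θ₀ = iγ/ν` the S-matrix `Ŝ(θ₀)` degenerates: its kernel is the
line spanned by the q-singlet `s = e^{−iγ/2}e₊⊗e₋ − e^{iγ/2}e₋⊗e₊`, and its image is the
3-dimensional q-triplet subspace spanned by `e₊⊗e₊`, `e₋⊗e₋` and
`e^{−iγ/2}e₊⊗e₋ + e^{iγ/2}e₋⊗e₊`. -/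
theorem Shat_degenerates_at_fusion_point (ν γ : ℝ) (hν : ν ≠ 0)
    (hγ : Complex.sin (γ : ℂ) ≠ 0) (h2γ : Complex.sin (2 * (γ : ℂ)) ≠ 0) :
    let θ₀ : ℂ := Complex.I * (γ : ℂ) / (ν : ℂ)
    let s : Fin 2 × Fin 2 → ℂ :=
      Complex.exp (-(Complex.I * (γ : ℂ)) / 2) • bvec 0 1
        - Complex.exp (Complex.I * (γ : ℂ) / 2) • bvec 1 0
    let t : Fin 2 × Fin 2 → ℂ :=
      Complex.exp (-(Complex.I * (γ : ℂ)) / 2) • bvec 0 1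
        + Complex.exp (Complex.I * (γ : ℂ) / 2) • bvec 1 0
    LinearMap.ker (Matrix.mulVecLin (Shat ν γ θ₀)) = Submodule.span ℂ {s} ∧
    LinearMap.range (Matrix.mulVecLin (Shat ν γ θ₀))
      = Submodule.span ℂ {bvec 0 0, bvec 1 1, t} := by
  intro θ₀ _ _
  have hθ₀ : (ν : ℂ) * θ₀ = Complex.I * γ := mul_div_cancel₀ _ (Complex.ofReal_ne_zero.mpr hν)
  have hsinglet : Complex.sinh (ν * θ₀) = Complex.I * Complex.sin γ := by rw [hθ₀, sinh_I_mul]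
  have htriplet : Complex.sinh (ν * θ₀ + Complex.I * γ) ≠ 0 := by
    rw [hθ₀, ← mul_add, ← two_mul, sinh_I_mul]
    exact mul_ne_zero Complex.I_ne_zero h2γ
  have hgeneral := Shat_degenerates_at_fusion_point_general ν γ θ₀ hsinglet htriplet
  rwa [hθ₀] at hgeneral
end
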